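/- arXiv:1604.08271 — 8 statements merged into one kernel-verified Lean document; each statement's English description precedes it below -/
import Mathlib

section
/- Let S ⊆ E, let R be a face of the localization 𝒜_S, and let R' be a face of 𝒜 = 𝒜_E. Then R' is contained in the topological closure of R if and only if S^+(R) ⊆ E^+(R') and S^-(R) ⊆ E^-(R'). (Lemma 2.1.) -/
open Set Submodule

noncomputable section

variable {E : Type*} [Fintype E]
variable {M : Type*} [NormedAddCommGroup M] [NormedSpace ℝ M] [FiniteDimensional ℝ M]

/-- The positive closed halfspace `H_e^+` of the hyperplane `H_e`. -/
def Hplus (a : E → (M →ₗ[ℝ] ℝ)) (r : E → ℝ) (e : E) : Set M := {m | a e m + r e ≤ 0}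

/-- The negative closed halfspace `H_e^-` of the hyperplane `H_e`. -/
def Hminus (a : E → (M →ₗ[ℝ] ℝ)) (r : E → ℝ) (e : E) : Set M := {m | 0 ≤ a e m + r e}

/-- `R` is a face of the localization `𝒜_S`: a nonempty fiber of the sign map
`M → SignType^S`, `m ↦ (sign (a e m + r e))_{e ∈ S}`. -/
def IsFace (a : E → (M →ₗ[ℝ] ℝ)) (r : E → ℝ) (S : Set E) (R : Set M) : Prop :=
  ∃ m₀ : M, R = {m : M | ∀ e ∈ S, SignType.sign (a e m + r e) = SignType.sign (a e m₀ + r e)}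

/-- `S^+(R)`: the elements `e ∈ S` with `R ⊆ H_e^+`. -/
def posSet (a : E → (M →ₗ[ℝ] ℝ)) (r : E → ℝ) (S : Set E) (R : Set M) : Set E :=
  {e ∈ S | R ⊆ Hplus a r e}

/-- `S^-(R)`: the elements `e ∈ S` with `R ⊆ H_e^-`. -/
def negSet (a : E → (M →ₗ[ℝ] ℝ)) (r : E → ℝ) (S : Set E) (R : Set M) : Set E :=
  {e ∈ S | R ⊆ Hminus a r e}

/-- Lemma 2.1: a face `R'` of `𝒜` is contained in the closure of a face `R` of `𝒜_S`
iff `S^+(R) ⊆ E^+(R')` and `S^-(R) ⊆ E^-(R')`. -/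
theorem face_subset_closure_iff
    (a : E → (M →ₗ[ℝ] ℝ)) (r : E → ℝ)
    (ha : ∀ e, a e ≠ 0) (hspan : Submodule.span ℝ (Set.range a) = ⊤)
    (S : Set E) (R : Set M) (R' : Set M)
    (hR : IsFace a r S R) (hR' : IsFace a r Set.univ R') :
    R' ⊆ closure R ↔
      posSet a r S R ⊆ posSet a r Set.univ R' ∧
      negSet a r S R ⊆ negSet a r Set.univ R' := by
  classical
  obtain ⟨m₀, rfl⟩ := hR
  have hc : ∀ e, Continuous fun m : M => a e m + r e := fun e =>
    (LinearMap.continuous_of_finiteDimensional (a e)).add continuous_const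
  constructor
  · intro h
    refine ⟨fun e he => ⟨mem_univ _, h.trans ?_⟩, fun e he => ⟨mem_univ _, h.trans ?_⟩⟩
    · exact closure_minimal he.2 (isClosed_le (hc e) continuous_const)
    · exact closure_minimal he.2 (isClosed_le continuous_const (hc e))
  · rintro ⟨hp, hn⟩ m hm
    have key1 : ∀ e ∈ S, a e m₀ + r e ≤ 0 → a e m + r e ≤ 0 := by
      intro e he h0
      refine (hp ⟨he, fun x hx => ?_⟩).2 hm
      have hx' := hx e he
      change a e x + r e ≤ 0
      by_contra! hlt
      rw [sign_pos hlt] at hx'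
      have := sign_eq_one_iff.1 hx'.symm
      linarith
    have key2 : ∀ e ∈ S, 0 ≤ a e m₀ + r e → 0 ≤ a e m + r e := by
      intro e he h0
      refine (hn ⟨he, fun x hx => ?_⟩).2 hm
      have hx' := hx e he
      change 0 ≤ a e x + r e
      by_contra! hlt
      rw [sign_neg hlt] at hx'
      have := sign_eq_neg_one_iff.1 hx'.symm
      linarith
    have hsub := segment_subset_closure_openSegment (𝕜 := ℝ) (left_mem_segment ℝ m m₀)
    refine closure_mono ?_ hsub
    rintro x ⟨s, t, hs, ht, hst, rfl⟩ e he
    have hv : a e (s • m + t • m₀) + r e = s * (a e m + r e) + t * (a e m₀ + r e) := by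
      have : r e = (s + t) * r e := by rw [hst, one_mul]
      simp only [map_add, map_smul, smul_eq_mul]
      linear_combination this
    rw [hv]
    have k1 := key1 e he
    have k2 := key2 e he
    rcases lt_trichotomy (a e m₀ + r e) 0 with h | h | h
    · rw [sign_neg h, sign_neg]
      have := k1 h.le
      nlinarith [mul_neg_of_pos_of_neg ht h]
    · have h' : a e m + r e = 0 := le_antisymm (k1 h.le) (k2 h.ge)
      rw [h, h']; simp
    · rw [sign_pos h, sign_pos]
      have := k2 h.le
      nlinarith [mul_pos ht h]

end
end

section
/- Let S ⊆ E and let R be a face of the localization 𝒜_S. Then the dimension of R, i.e. the finrank of its direction space vectorSpan ℝ R, equals d − finrank(span{a_e : e ∈ S^0(R)}); equivalently, the codimension of R in M equals the codimension of the affine subspace ⋂_{e ∈ S^0(R)} H_e. (Equation (2.2) of the paper.) -/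
open Set Submodule

noncomputable section

variable {E : Type*} [Fintype E]
variable {M : Type*} [NormedAddCommGroup M] [NormedSpace ℝ M] [FiniteDimensional ℝ M]

/-- `S^0(R) = S^+(R) ∩ S^-(R)`. -/
def zeroSet (a : E → (M →ₗ[ℝ] ℝ)) (r : E → ℝ) (S : Set E) (R : Set M) : Set E :=
  posSet a r S R ∩ negSet a r S R

theorem mem_zeroSet_iff_aux (a : E → (M →ₗ[ℝ] ℝ)) (r : E → ℝ) (S : Set E) (m₀ : M) (e : E) :
    e ∈ zeroSet a r S {m : M | ∀ e ∈ S, SignType.sign (a e m + r e) =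
      SignType.sign (a e m₀ + r e)} ↔ e ∈ S ∧ a e m₀ + r e = 0 := by
  constructor
  · rintro ⟨⟨h1, h2⟩, ⟨_, h3⟩⟩
    have h : m₀ ∈ {m : M | ∀ e ∈ S, SignType.sign (a e m + r e) =
      SignType.sign (a e m₀ + r e)} := fun _ _ => rfl
    exact ⟨h1, le_antisymm (h2 h) (h3 h)⟩
  · rintro ⟨h1, h2⟩
    have key : ∀ m ∈ {m : M | ∀ e ∈ S, SignType.sign (a e m + r e) =
      SignType.sign (a e m₀ + r e)}, a e m + r e = 0 := by
      intro m hm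
      have := hm e h1
      rwa [h2, sign_zero, sign_eq_zero_iff] at this
    exact ⟨⟨h1, fun m hm => (key m hm).le⟩, ⟨h1, fun m hm => (key m hm).ge⟩⟩

theorem vectorSpan_face_aux (a : E → (M →ₗ[ℝ] ℝ)) (r : E → ℝ) (S : Set E) (R : Set M)
    (hR : IsFace a r S R) :
    vectorSpan ℝ R = (Submodule.span ℝ (a '' zeroSet a r S R) :
      Submodule ℝ (Module.Dual ℝ M)).dualCoannihilator := by
  obtain ⟨m₀, rfl⟩ := hR
  have hmem : ∀ v : M, v ∈ (Submodule.span ℝ (a '' zeroSet a r S {m : M | ∀ e ∈ S,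
      SignType.sign (a e m + r e) = SignType.sign (a e m₀ + r e)}) :
      Submodule ℝ (Module.Dual ℝ M)).dualCoannihilator ↔
      ∀ e ∈ S, a e m₀ + r e = 0 → a e v = 0 := by
    intro v
    rw [← SetLike.mem_coe, Submodule.coe_dualCoannihilator_span]
    constructor
    · intro h e he h0
      exact h (a e) ⟨e, (mem_zeroSet_iff_aux a r S m₀ e).2 ⟨he, h0⟩, rfl⟩
    · rintro h _ ⟨e, he, rfl⟩
      obtain ⟨h1, h2⟩ := (mem_zeroSet_iff_aux a r S m₀ e).1 he
      exact h e h1 h2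
  apply le_antisymm
  · rw [vectorSpan_def, Submodule.span_le]
    rintro _ ⟨x, hx, y, hy, rfl⟩
    refine (hmem _).2 fun e he h0 => ?_
    have h1 := hx e he
    have h2 := hy e he
    rw [h0, sign_zero, sign_eq_zero_iff] at h1 h2
    simp only [vsub_eq_sub, map_sub]
    linarith
  · intro v hv
    have hv := (hmem v).1 hv
    have hev : ∀ᶠ t : ℝ in nhdsWithin 0 (Set.Ioi 0), ∀ e : E, e ∈ S →
        SignType.sign (a e (m₀ + t • v) + r e) = SignType.sign (a e m₀ + r e) := by
      rw [Filter.eventually_all]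
      intro e
      by_cases he : e ∈ S
      swap
      · exact Filter.Eventually.of_forall fun t h => absurd h he
      have hc : Filter.Tendsto (fun t : ℝ => a e (m₀ + t • v) + r e)
          (nhdsWithin 0 (Set.Ioi 0)) (nhds (a e m₀ + r e)) := by
        have : Continuous (fun t : ℝ => a e (m₀ + t • v) + r e) := by
          simp only [map_add, map_smul, smul_eq_mul]
          fun_prop
        have h := this.tendsto 0
        simp only [zero_smul, add_zero] at h
        exact h.mono_left nhdsWithin_le_nhds
      rcases lt_trichotomy (a e m₀ + r e) 0 with h | h | h
      · filter_upwards [hc.eventually_lt_const h] with t ht _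
        rw [sign_neg ht, sign_neg h]
      · refine Filter.Eventually.of_forall fun t _ => ?_
        simp [hv e he h]
      · filter_upwards [hc.eventually_const_lt h] with t ht _
        rw [sign_pos ht, sign_pos h]
    obtain ⟨t, ht, ht0⟩ := (hev.and self_mem_nhdsWithin).exists
    have ht0 : (0 : ℝ) < t := ht0
    have h := vsub_mem_vectorSpan ℝ (s := {m : M | ∀ e ∈ S, SignType.sign (a e m + r e) =
      SignType.sign (a e m₀ + r e)}) (p₁ := m₀ + t • v) (p₂ := m₀) ht (fun _ _ => rfl)
    simp only [vsub_eq_sub, add_sub_cancel_left] at h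
    exact (Submodule.smul_mem_iff _ ht0.ne').1 h

/-- Equation (2.2): the dimension of a face `R` of `𝒜_S` equals
`d - finrank (span {a_e : e ∈ S^0(R)})`, i.e. the codimension of `R` in `M` is the
codimension of `⋂_{e ∈ S^0(R)} H_e`. -/
theorem face_dim
    (a : E → (M →ₗ[ℝ] ℝ)) (r : E → ℝ)
    (ha : ∀ e, a e ≠ 0) (hspan : Submodule.span ℝ (Set.range a) = ⊤)
    (S : Set E) (R : Set M) (hR : IsFace a r S R) :
    Module.finrank ℝ (vectorSpan ℝ R) =
      Module.finrank ℝ M -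
        Module.finrank ℝ (Submodule.span ℝ (a '' zeroSet a r S R)) := by
  rw [vectorSpan_face_aux a r S R hR]
  have h := Subspace.finrank_add_finrank_dualCoannihilator_eq
    (Submodule.span ℝ (a '' zeroSet a r S R) : Submodule ℝ (Module.Dual ℝ M))
  exact Nat.eq_sub_of_add_eq' h

end
end

section
/- Let S, S' ⊆ E, let R be a face of 𝒜_S and let R' be a face of 𝒜_{S'}. Then σ_{S',R'} is a nonempty exposed face of σ_{S,R} (in the sense of IsExposed ℝ) if and only if S' ⊆ S and R is contained in the topological closure of R'. (Face-relation part of Proposition 4.1.) -/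
open Set Submodule

noncomputable section

variable {E : Type*} [Fintype E] [DecidableEq E]
variable {M : Type*} [NormedAddCommGroup M] [NormedSpace ℝ M] [FiniteDimensional ℝ M]

/-- The linear map `(E → ℝ) → N` sending the basis vector `δ_e` to `a_e`. -/
def toN (a : E → (M →ₗ[ℝ] ℝ)) : (E → ℝ) →ₗ[ℝ] (M →ₗ[ℝ] ℝ) :=
  Fintype.linearCombination ℝ a

/-- `Λ`, the kernel of `(E → ℝ) → N`. -/
def Lam (a : E → (M →ₗ[ℝ] ℝ)) : Submodule ℝ (E → ℝ) := LinearMap.ker (toN a)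

/-- The antidiagonal embedding `∇ : x ↦ (x, -x)`. -/
def nabla : (E → ℝ) →ₗ[ℝ] (E → ℝ) × (E → ℝ) :=
  LinearMap.prod LinearMap.id (-LinearMap.id)

/-- `∇(Λ)`. -/
def nabLam (a : E → (M →ₗ[ℝ] ℝ)) : Submodule ℝ ((E → ℝ) × (E → ℝ)) :=
  (Lam a).map nabla

/-- The Lawrence cocharacter space `Ñ = ((E → ℝ) × (E → ℝ))/∇(Λ)`. -/
abbrev tildeN (a : E → (M →ₗ[ℝ] ℝ)) : Type _ := ((E → ℝ) × (E → ℝ)) ⧸ nabLam a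

/-- `ρ_e^+`, the image of `(δ_e, 0)` in `Ñ`. -/
def rhoP (a : E → (M →ₗ[ℝ] ℝ)) (e : E) : tildeN a :=
  Submodule.Quotient.mk (Pi.single e 1, 0)

/-- `ρ_e^-`, the image of `(0, δ_e)` in `Ñ`. -/
def rhoM (a : E → (M →ₗ[ℝ] ℝ)) (e : E) : tildeN a :=
  Submodule.Quotient.mk (0, Pi.single e 1)

/-- The cone `σ_{S,R} ⊆ Ñ` generated by `{ρ_e^+ : e ∈ S^+(R)} ∪ {ρ_f^- : f ∈ S^-(R)}`
together with `0`: the set of all nonnegative linear combinations of these generators. -/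
def sigmaCone (a : E → (M →ₗ[ℝ] ℝ)) (r : E → ℝ) (S : Set E) (R : Set M) : Set (tildeN a) :=
  {v | ∃ c d : E → ℝ, (∀ e, 0 ≤ c e) ∧ (∀ e, 0 ≤ d e) ∧
    v = ∑ e, (posSet a r S R).indicator c e • rhoP a e
      + ∑ e, (negSet a r S R).indicator d e • rhoM a e}

lemma exists_functional (a : E → (M →ₗ[ℝ] ℝ)) (p q : E → ℝ) (t : M)
    (h : ∀ e, p e - q e = a e t) :
    ∃ l : StrongDual ℝ (tildeN a), (∀ e, l (rhoP a e) = p e) ∧ (∀ e, l (rhoM a e) = q e) := by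
  let f : ((E → ℝ) × (E → ℝ)) →ₗ[ℝ] ℝ :=
    (Fintype.linearCombination ℝ p).coprod (Fintype.linearCombination ℝ q)
  have hf : ∀ u v, f (u, v) = ∑ e, u e * p e + ∑ e, v e * q e := by
    intro u v
    simp [f, Fintype.linearCombination_apply]
  have hker : nabLam a ≤ LinearMap.ker f := by
    rintro _ ⟨x, hx, rfl⟩
    have hx' : toN a x = 0 := hx
    have hx2 : ∑ e, x e * a e t = 0 := by
      have := congrArg (fun g : M →ₗ[ℝ] ℝ => g t) hx'
      simpa [toN, Fintype.linearCombination_apply, LinearMap.sum_apply] using this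
    rw [LinearMap.mem_ker]
    have : (nabla x : (E → ℝ) × (E → ℝ)) = (x, -x) := rfl
    rw [this, hf, ← hx2, ← Finset.sum_add_distrib]
    refine Finset.sum_congr rfl fun e _ => ?_
    rw [← h e]
    simp only [Pi.neg_apply]
    ring
  have hc : Continuous ((nabLam a).liftQ f hker) := by
    have hfc : Continuous f := f.continuous_of_finiteDimensional
    exact hfc.quotient_lift _
  refine ⟨⟨(nabLam a).liftQ f hker, hc⟩, fun e => ?_, fun e => ?_⟩
  · change f (Pi.single e 1, 0) = p e
    rw [hf]
    simp [Pi.single_apply]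
  · change f (0, Pi.single e 1) = q e
    rw [hf]
    simp [Pi.single_apply]

lemma functional_nonpos (a : E → (M →ₗ[ℝ] ℝ)) (r : E → ℝ) (S : Set E) (R : Set M)
    (l : StrongDual ℝ (tildeN a))
    (hp : ∀ e ∈ posSet a r S R, l (rhoP a e) ≤ 0)
    (hq : ∀ e ∈ negSet a r S R, l (rhoM a e) ≤ 0) :
    ∀ v ∈ sigmaCone a r S R, l v ≤ 0 := by
  rintro v ⟨c, d, hc, hd, rfl⟩
  rw [map_add, map_sum, map_sum]
  refine add_nonpos (Finset.sum_nonpos fun e _ => ?_) (Finset.sum_nonpos fun e _ => ?_)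
  · rw [map_smul, smul_eq_mul]
    by_cases he : e ∈ posSet a r S R
    · rw [Set.indicator_of_mem he]
      exact mul_nonpos_of_nonneg_of_nonpos (hc e) (hp e he)
    · simp [he]
  · rw [map_smul, smul_eq_mul]
    by_cases he : e ∈ negSet a r S R
    · rw [Set.indicator_of_mem he]
      exact mul_nonpos_of_nonneg_of_nonpos (hd e) (hq e he)
    · simp [he]

lemma rhoP_mem (a : E → (M →ₗ[ℝ] ℝ)) (r : E → ℝ) (S : Set E) (R : Set M) (e : E)
    (he : e ∈ posSet a r S R) : rhoP a e ∈ sigmaCone a r S R := by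
  refine ⟨Pi.single e 1, 0, fun f => ?_, fun f => le_rfl, ?_⟩
  · by_cases h : f = e
    · subst h; simp
    · simp [h]
  · rw [Finset.sum_eq_single e]
    · simp [he]
    · intro f _ hf
      by_cases h : f ∈ posSet a r S R <;> simp [h, hf]
    · simp

lemma rhoM_mem (a : E → (M →ₗ[ℝ] ℝ)) (r : E → ℝ) (S : Set E) (R : Set M) (e : E)
    (he : e ∈ negSet a r S R) : rhoM a e ∈ sigmaCone a r S R := by
  refine ⟨0, Pi.single e 1, fun f => le_rfl, fun f => ?_, ?_⟩
  · by_cases h : f = e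
    · subst h; simp
    · simp [h]
  · rw [Finset.sum_eq_single (s := Finset.univ) (f := fun f => (negSet a r S R).indicator
      (Pi.single e 1 : E → ℝ) f • rhoM a f) e]
    · simp [he]
    · intro f _ hf
      by_cases h : f ∈ negSet a r S R <;> simp [h, hf]
    · simp

lemma zero_mem_sigmaCone (a : E → (M →ₗ[ℝ] ℝ)) (r : E → ℝ) (S : Set E) (R : Set M) :
    (0 : tildeN a) ∈ sigmaCone a r S R :=
  ⟨0, 0, fun _ => le_rfl, fun _ => le_rfl, by simp⟩

lemma sign_eq_nonpos {x y : ℝ} (h : SignType.sign x = SignType.sign y) (hy : y ≤ 0) : x ≤ 0 := by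
  by_contra hx
  push Not at hx
  rw [sign_pos hx] at h
  exact absurd (sign_eq_one_iff.1 h.symm) (not_lt.2 hy)

lemma sign_eq_nonneg {x y : ℝ} (h : SignType.sign x = SignType.sign y) (hy : 0 ≤ y) : 0 ≤ x := by
  by_contra hx
  push Not at hx
  rw [sign_neg hx] at h
  exact absurd (sign_eq_neg_one_iff.1 h.symm) (not_lt.2 hy)

/-- membership of `ρ_e^+` in the cone. -/
lemma mem_pos_of_rhoP_mem (a : E → (M →ₗ[ℝ] ℝ)) (r : E → ℝ) (ha : ∀ e, a e ≠ 0)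
    (S : Set E) (R : Set M) (m : M) (hm : m ∈ R)
    (hp : ∀ e ∈ S, a e m + r e ≤ 0 → e ∈ posSet a r S R)
    (e : E) (h : rhoP a e ∈ sigmaCone a r S R) : e ∈ posSet a r S R := by
  by_cases he : e ∈ S
  · refine hp e he ?_
    by_contra hx
    obtain ⟨t0, ht0⟩ : ∃ t0, a e t0 ≠ 0 := by
      by_contra! hh
      exact ha e (LinearMap.ext hh)
    obtain ⟨t, ht⟩ : ∃ t, a e t = 1 := ⟨(a e t0)⁻¹ • t0, by simp [ht0]⟩
    obtain ⟨l, h1, h2⟩ := exists_functional a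
      (fun f => if f = e then 1 else -|a f t|)
      (fun f => if f = e then 0 else -|a f t| - a f t) t (by
        intro f
        by_cases hf : f = e
        · subst hf; simp [ht]
        · simp [hf])
    have := functional_nonpos a r S R l (by
        intro f hf
        rw [h1]
        by_cases hfe : f = e
        · subst hfe; exact absurd (hf.2 hm) hx
        · simp [hfe]) (by
        intro f hf
        rw [h2]
        by_cases hfe : f = e
        · simp [hfe]
        · simp only [hfe, if_false]
          linarith [neg_abs_le (a f t)]) _ h
    rw [h1] at this
    norm_num at this
  · obtain ⟨l, h1, h2⟩ := exists_functional a
      (fun f => if f = e then 1 else 0) (fun f => if f = e then 1 else 0) 0 (by simp)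
    have := functional_nonpos a r S R l (by
        intro f hf
        have : f ≠ e := by rintro rfl; exact he hf.1
        simp [h1, this]) (by
        intro f hf
        have : f ≠ e := by rintro rfl; exact he hf.1
        simp [h2, this]) _ h
    rw [h1] at this
    norm_num at this

/-- membership of `ρ_e^-` in the cone. -/
lemma mem_neg_of_rhoM_mem (a : E → (M →ₗ[ℝ] ℝ)) (r : E → ℝ) (ha : ∀ e, a e ≠ 0)
    (S : Set E) (R : Set M) (m : M) (hm : m ∈ R)
    (hq : ∀ e ∈ S, 0 ≤ a e m + r e → e ∈ negSet a r S R)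
    (e : E) (h : rhoM a e ∈ sigmaCone a r S R) : e ∈ negSet a r S R := by
  by_cases he : e ∈ S
  · refine hq e he ?_
    by_contra hx
    obtain ⟨t0, ht0⟩ : ∃ t0, a e t0 ≠ 0 := by
      by_contra! hh
      exact ha e (LinearMap.ext hh)
    obtain ⟨t, ht⟩ : ∃ t, a e t = -1 := ⟨(-(a e t0)⁻¹) • t0, by simp [ht0]⟩
    obtain ⟨l, h1, h2⟩ := exists_functional a
      (fun f => if f = e then 0 else -|a f t|)
      (fun f => if f = e then 1 else -|a f t| - a f t) t (by
        intro f
        by_cases hf : f = e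
        · subst hf; simp [ht]
        · simp [hf])
    have := functional_nonpos a r S R l (by
        intro f hf
        rw [h1]
        by_cases hfe : f = e
        · simp [hfe]
        · simp [hfe]) (by
        intro f hf
        rw [h2]
        by_cases hfe : f = e
        · subst hfe; exact absurd (hf.2 hm) hx
        · simp only [hfe, if_false]
          linarith [neg_abs_le (a f t)]) _ h
    rw [h2] at this
    norm_num at this
  · obtain ⟨l, h1, h2⟩ := exists_functional a
      (fun f => if f = e then 1 else 0) (fun f => if f = e then 1 else 0) 0 (by simp)
    have := functional_nonpos a r S R l (by
        intro f hf
        have : f ≠ e := by rintro rfl; exact he hf.1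
        simp [h1, this]) (by
        intro f hf
        have : f ≠ e := by rintro rfl; exact he hf.1
        simp [h2, this]) _ h
    rw [h2] at this
    norm_num at this

/-- If all points of `R` satisfy weakly the sign conditions of `R'` then `R ⊆ closure R'`. -/
lemma mem_closure_face (a : E → (M →ₗ[ℝ] ℝ)) (r : E → ℝ) (S' : Set E) (m m' : M)
    (hp : ∀ e ∈ S', a e m' + r e ≤ 0 → a e m + r e ≤ 0)
    (hq : ∀ e ∈ S', 0 ≤ a e m' + r e → 0 ≤ a e m + r e) :
    m ∈ closure {x : M | ∀ e ∈ S', SignType.sign (a e x + r e) = SignType.sign (a e m' + r e)} := by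
  have hlim : Filter.Tendsto (fun s : ℝ => m + s • (m' - m)) (nhdsWithin 0 (Set.Ioi 0)) (nhds m) := by
    have hc : Continuous (fun s : ℝ => m + s • (m' - m)) := by fun_prop
    have := (hc.tendsto 0).mono_left (nhdsWithin_le_nhds (s := Set.Ioi 0))
    simpa using this
  refine mem_closure_of_tendsto hlim ?_
  filter_upwards [Ioo_mem_nhdsGT (zero_lt_one' ℝ)] with s hs
  intro e he
  have key : a e (m + s • (m' - m)) + r e = (1 - s) * (a e m + r e) + s * (a e m' + r e) := by
    simp only [map_add, map_smul, map_sub, smul_eq_mul]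
    ring
  rw [key]
  have h1 : 0 < 1 - s := by linarith [hs.2]
  rcases lt_trichotomy (a e m' + r e) 0 with h | h | h
  · rw [sign_neg h, sign_eq_neg_one_iff]
    nlinarith [hp e he h.le, mul_pos_of_neg_of_neg h (neg_neg_of_pos hs.1),
      mul_nonneg h1.le (neg_nonneg.2 (hp e he h.le))]
  · have : a e m + r e = 0 := le_antisymm (hp e he h.le) (hq e he h.ge)
    rw [this, h]
    simp
  · rw [sign_pos h, sign_eq_one_iff]
    nlinarith [mul_pos h hs.1, mul_nonneg h1.le (hq e he h.le)]

/-- Face-relation part of Proposition 4.1: `σ_{S',R'}` is a nonempty exposed face of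
`σ_{S,R}` iff `S' ⊆ S` and `R ⊆ closure R'`. -/
theorem sigmaCone_isExposed_iff
    (a : E → (M →ₗ[ℝ] ℝ)) (r : E → ℝ)
    (ha : ∀ e, a e ≠ 0) (hspan : Submodule.span ℝ (Set.range a) = ⊤)
    (S S' : Set E) (R R' : Set M)
    (hR : IsFace a r S R) (hR' : IsFace a r S' R') :
    ((sigmaCone a r S' R').Nonempty ∧
        IsExposed ℝ (sigmaCone a r S R) (sigmaCone a r S' R')) ↔
      S' ⊆ S ∧ R ⊆ closure R' := by
  obtain ⟨m₀, rfl⟩ := hR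
  obtain ⟨m₁, rfl⟩ := hR'
  set R : Set M := {m : M | ∀ e ∈ S, SignType.sign (a e m + r e) = SignType.sign (a e m₀ + r e)}
    with hRdef
  set R' : Set M := {m : M | ∀ e ∈ S', SignType.sign (a e m + r e) = SignType.sign (a e m₁ + r e)}
    with hRdef'
  have hm₀ : m₀ ∈ R := fun e _ => rfl
  have hm₁ : m₁ ∈ R' := fun e _ => rfl
  have hp : ∀ e ∈ S, a e m₀ + r e ≤ 0 → e ∈ posSet a r S R :=
    fun e he h => ⟨he, fun m hm => sign_eq_nonpos (hm e he) h⟩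
  have hq : ∀ e ∈ S, 0 ≤ a e m₀ + r e → e ∈ negSet a r S R :=
    fun e he h => ⟨he, fun m hm => sign_eq_nonneg (hm e he) h⟩
  have hp' : ∀ e ∈ S', a e m₁ + r e ≤ 0 → e ∈ posSet a r S' R' :=
    fun e he h => ⟨he, fun m hm => sign_eq_nonpos (hm e he) h⟩
  have hq' : ∀ e ∈ S', 0 ≤ a e m₁ + r e → e ∈ negSet a r S' R' :=
    fun e he h => ⟨he, fun m hm => sign_eq_nonneg (hm e he) h⟩
  constructor
  · rintro ⟨hne, hexp⟩
    have hsub : sigmaCone a r S' R' ⊆ sigmaCone a r S R := hexp.subset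
    have hP : ∀ e ∈ posSet a r S' R', e ∈ posSet a r S R := fun e he =>
      mem_pos_of_rhoP_mem a r ha S R m₀ hm₀ hp e (hsub (rhoP_mem a r S' R' e he))
    have hN : ∀ e ∈ negSet a r S' R', e ∈ negSet a r S R := fun e he =>
      mem_neg_of_rhoM_mem a r ha S R m₀ hm₀ hq e (hsub (rhoM_mem a r S' R' e he))
    refine ⟨fun e he => ?_, fun m hm => ?_⟩
    · rcases le_total (a e m₁ + r e) 0 with h | h
      · exact (hP e (hp' e he h)).1
      · exact (hN e (hq' e he h)).1
    · exact mem_closure_face a r S' m m₁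
        (fun e he h => (hP e (hp' e he h)).2 hm) (fun e he h => (hN e (hq' e he h)).2 hm)
  · rintro ⟨hS, hcl⟩
    have hcont : ∀ e, Continuous (fun m : M => a e m + r e) := fun e =>
      ((a e).continuous_of_finiteDimensional).add continuous_const
    have hP : posSet a r S' R' ⊆ posSet a r S R := fun e he =>
      ⟨hS he.1, hcl.trans (closure_minimal he.2 (isClosed_le (hcont e) continuous_const))⟩
    have hN : negSet a r S' R' ⊆ negSet a r S R := fun e he =>
      ⟨hS he.1, hcl.trans (closure_minimal he.2 (isClosed_le continuous_const (hcont e)))⟩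
    refine ⟨⟨0, zero_mem_sigmaCone a r S' R'⟩, fun _ => ?_⟩
    classical
    let p : E → ℝ := fun e => if e ∈ S' then
      (if a e m₁ + r e ≤ 0 then 0 else a e m₀ - a e m₁) else -|a e m₀ - a e m₁| - 1
    let q : E → ℝ := fun e => p e - (a e m₀ - a e m₁)
    obtain ⟨l, hl1, hl2⟩ := exists_functional a p q (m₀ - m₁) (by
      intro e; simp only [q, map_sub]; ring)
    have sp : ∀ e ∈ posSet a r S R, p e ≤ 0 ∧ (p e = 0 → e ∈ posSet a r S' R') := by
      intro e he
      have hx : a e m₀ + r e ≤ 0 := he.2 hm₀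
      by_cases heS : e ∈ S'
      · by_cases h : a e m₁ + r e ≤ 0
        · exact ⟨by simp [p, heS, h], fun _ => hp' e heS h⟩
        · have : p e = a e m₀ - a e m₁ := by simp [p, heS, h]
          push Not at h
          rw [this]
          exact ⟨by linarith, fun h0 => by linarith⟩
      · have : p e = -|a e m₀ - a e m₁| - 1 := by simp [p, heS]
        have h3 := abs_nonneg (a e m₀ - a e m₁)
        rw [this]
        exact ⟨by linarith, fun h0 => by linarith⟩
    have sq : ∀ e ∈ negSet a r S R, q e ≤ 0 ∧ (q e = 0 → e ∈ negSet a r S' R') := by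
      intro e he
      have hx : 0 ≤ a e m₀ + r e := he.2 hm₀
      by_cases heS : e ∈ S'
      · by_cases h : a e m₁ + r e ≤ 0
        · have : q e = - (a e m₀ - a e m₁) := by simp [q, p, heS, h]
          rw [this]
          exact ⟨by linarith, fun h0 => hq' e heS (by linarith)⟩
        · push Not at h
          refine ⟨?_, fun _ => hq' e heS h.le⟩
          simp [q, p, heS, not_le.2 h]
      · have : q e = -|a e m₀ - a e m₁| - 1 - (a e m₀ - a e m₁) := by simp [q, p, heS]
        have h3 := neg_abs_le (a e m₀ - a e m₁)
        rw [this]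
        exact ⟨by linarith, fun h0 => by linarith⟩
    have zp : ∀ e ∈ posSet a r S' R', p e = 0 := by
      intro e he
      have h : a e m₁ + r e ≤ 0 := he.2 hm₁
      simp [p, he.1, h]
    have zq : ∀ e ∈ negSet a r S' R', q e = 0 := by
      intro e he
      have h : 0 ≤ a e m₁ + r e := he.2 hm₁
      by_cases h' : a e m₁ + r e ≤ 0
      · have h1 : a e m₀ + r e ≤ 0 := (hP (hp' e he.1 h')).2 hm₀
        have h2 : 0 ≤ a e m₀ + r e := (hN he).2 hm₀
        have : q e = - (a e m₀ - a e m₁) := by simp [q, p, he.1, h']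
        rw [this]
        linarith
      · simp [q, p, he.1, h']
    have hnon := functional_nonpos a r S R l (fun e he => by rw [hl1]; exact (sp e he).1)
      (fun e he => by rw [hl2]; exact (sq e he).1)
    refine ⟨l, Set.Subset.antisymm ?_ ?_⟩
    · rintro v ⟨c, d, hc, hd, rfl⟩
      refine ⟨⟨(posSet a r S' R').indicator c, (negSet a r S' R').indicator d,
        fun e => Set.indicator_nonneg (fun e _ => hc e) e,
        fun e => Set.indicator_nonneg (fun e _ => hd e) e, ?_⟩, fun y hy => ?_⟩
      · rw [Set.indicator_indicator, Set.indicator_indicator,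
          Set.inter_eq_right.2 hP, Set.inter_eq_right.2 hN]
      · refine (hnon y hy).trans (le_of_eq ?_)
        rw [map_add, map_sum, map_sum, Finset.sum_eq_zero, Finset.sum_eq_zero, add_zero]
        · intro e _
          by_cases he : e ∈ negSet a r S' R'
          · rw [map_smul, hl2, zq e he, smul_zero]
          · simp [he]
        · intro e _
          by_cases he : e ∈ posSet a r S' R'
          · rw [map_smul, hl1, zp e he, smul_zero]
          · simp [he]
    · rintro v ⟨⟨c, d, hc, hd, rfl⟩, hmax⟩
      have h0 := hmax 0 (zero_mem_sigmaCone a r S R)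
      rw [map_zero, map_add, map_sum, map_sum] at h0
      simp only [map_smul, hl1, hl2, smul_eq_mul] at h0
      have t1 : ∀ e ∈ Finset.univ, (posSet a r S R).indicator c e * p e ≤ 0 := by
        intro e _
        by_cases he : e ∈ posSet a r S R
        · rw [Set.indicator_of_mem he]
          exact mul_nonpos_of_nonneg_of_nonpos (hc e) (sp e he).1
        · simp [he]
      have t2 : ∀ e ∈ Finset.univ, (negSet a r S R).indicator d e * q e ≤ 0 := by
        intro e _
        by_cases he : e ∈ negSet a r S R
        · rw [Set.indicator_of_mem he]
          exact mul_nonpos_of_nonneg_of_nonpos (hd e) (sq e he).1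
        · simp [he]
      have s1 := Finset.sum_nonpos t1
      have s2 := Finset.sum_nonpos t2
      have u1 := (Finset.sum_eq_zero_iff_of_nonpos t1).1 (by linarith)
      have u2 := (Finset.sum_eq_zero_iff_of_nonpos t2).1 (by linarith)
      refine ⟨c, d, hc, hd, ?_⟩
      congr 1
      · refine Finset.sum_congr rfl fun e he => ?_
        congr 1
        by_cases h1 : e ∈ posSet a r S R
        · by_cases h2 : e ∈ posSet a r S' R'
          · rw [Set.indicator_of_mem h1, Set.indicator_of_mem h2]
          · have := u1 e he
            rw [mul_eq_zero] at this
            rw [Set.indicator_of_notMem h2]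
            exact this.resolve_right fun h => h2 ((sp e h1).2 h)
        · rw [Set.indicator_of_notMem h1, Set.indicator_of_notMem fun h => h1 (hP h)]
      · refine Finset.sum_congr rfl fun e he => ?_
        congr 1
        by_cases h1 : e ∈ negSet a r S R
        · by_cases h2 : e ∈ negSet a r S' R'
          · rw [Set.indicator_of_mem h1, Set.indicator_of_mem h2]
          · have := u2 e he
            rw [mul_eq_zero] at this
            rw [Set.indicator_of_notMem h2]
            exact this.resolve_right fun h => h2 ((sq e h1).2 h)
        · rw [Set.indicator_of_notMem h1, Set.indicator_of_notMem fun h => h1 (hN h)]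

end
end

section
/- Let S ⊆ E and let R be a face of 𝒜_S. Every nonempty exposed face τ of the cone σ_{S,R} (in the sense of IsExposed ℝ) is of the form σ_{S',R'} for some S' ⊆ S and some face R' of 𝒜_{S'} with R contained in the topological closure of R'. (Classification of faces, from the proof of Proposition 4.1.) -/
open Set Submodule

noncomputable section

variable {E : Type*} [Fintype E] [DecidableEq E]
variable {M : Type*} [NormedAddCommGroup M] [NormedSpace ℝ M] [FiniteDimensional ℝ M]

lemma exists_repr (a : E → (M →ₗ[ℝ] ℝ)) (l : tildeN a →ₗ[ℝ] ℝ) :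
    ∃ m : M, ∀ e, l (rhoP a e) - l (rhoM a e) = a e m := by
  let φ : (E → ℝ) →ₗ[ℝ] ℝ := l ∘ₗ (nabLam a).mkQ ∘ₗ nabla
  have h1 : φ ∈ (LinearMap.ker (toN a)).dualAnnihilator := by
    rw [Submodule.mem_dualAnnihilator]
    intro w hw
    have : (nabLam a).mkQ (nabla w) = 0 := by
      rw [Submodule.mkQ_apply, Submodule.Quotient.mk_eq_zero]
      exact ⟨w, hw, rfl⟩
    simp [φ, this]
  rw [← LinearMap.range_dualMap_eq_dualAnnihilator_ker] at h1
  obtain ⟨ψ, hψ⟩ := h1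
  refine ⟨(Module.evalEquiv ℝ M).symm ψ, fun e => ?_⟩
  have h2 : ψ (a e) = a e ((Module.evalEquiv ℝ M).symm ψ) := by
    simp
  rw [← h2]
  have h3 := LinearMap.congr_fun hψ (Pi.single e 1)
  have h4 : toN a (Pi.single e 1) = a e := by
    simp [toN, Fintype.linearCombination_apply_single]
  rw [LinearMap.dualMap_apply, h4] at h3
  rw [h3, ← map_sub]
  simp only [φ, rhoP, rhoM, LinearMap.comp_apply, Submodule.mkQ_apply, ← Submodule.Quotient.mk_sub]
  congr 2
  simp [nabla]

lemma eventually_sign (b c : ℝ) : ∀ᶠ t : ℝ in nhdsWithin 0 (Set.Ioi 0),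
    SignType.sign (b + t * c) =
      if SignType.sign b = 0 then SignType.sign c else SignType.sign b := by
  have ht : Filter.Tendsto (fun t : ℝ => b + t * c) (nhdsWithin 0 (Set.Ioi 0)) (nhds b) := by
    have : ContinuousAt (fun t : ℝ => b + t * c) 0 := by fun_prop
    have h := this.tendsto
    simp only [zero_mul, add_zero] at h
    exact h.mono_left nhdsWithin_le_nhds
  rcases lt_trichotomy b 0 with hb | hb | hb
  · filter_upwards [ht.eventually (gt_mem_nhds hb)] with t h
    simp [sign_neg hb, sign_neg h]
  · subst hb
    filter_upwards [self_mem_nhdsWithin] with t h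
    simp [sign_mul, sign_pos (show (0:ℝ) < t from h)]
  · filter_upwards [ht.eventually (lt_mem_nhds hb)] with t h
    simp [sign_pos hb, sign_pos h]

/-- Signs of a face of a localization. -/
lemma mem_posSet_face (a : E → (M →ₗ[ℝ] ℝ)) (r : E → ℝ) (S : Set E) (m₀ : M) (e : E) :
    e ∈ posSet a r S {m : M | ∀ e ∈ S, SignType.sign (a e m + r e)
      = SignType.sign (a e m₀ + r e)} ↔ e ∈ S ∧ SignType.sign (a e m₀ + r e) ≤ 0 := by
  constructor
  · rintro ⟨h, h'⟩
    exact ⟨h, by rw [sign_nonpos_iff]; exact h' (fun _ _ => rfl)⟩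
  · rintro ⟨h, h'⟩
    refine ⟨h, fun m hm => ?_⟩
    rw [← hm e h, sign_nonpos_iff] at h'
    exact h'

lemma mem_negSet_face (a : E → (M →ₗ[ℝ] ℝ)) (r : E → ℝ) (S : Set E) (m₀ : M) (e : E) :
    e ∈ negSet a r S {m : M | ∀ e ∈ S, SignType.sign (a e m + r e)
      = SignType.sign (a e m₀ + r e)} ↔ e ∈ S ∧ 0 ≤ SignType.sign (a e m₀ + r e) := by
  constructor
  · rintro ⟨h, h'⟩
    exact ⟨h, by rw [sign_nonneg_iff]; exact h' (fun _ _ => rfl)⟩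
  · rintro ⟨h, h'⟩
    refine ⟨h, fun m hm => ?_⟩
    rw [← hm e h, sign_nonneg_iff] at h'
    exact h'

/-- The cone generated by `ρ_e^+`, `e ∈ P` and `ρ_e^-`, `e ∈ Q`. -/
def genCone (a : E → (M →ₗ[ℝ] ℝ)) (P Q : Set E) : Set (tildeN a) :=
  {v | ∃ c d : E → ℝ, (∀ e, 0 ≤ c e) ∧ (∀ e, 0 ≤ d e) ∧
    v = ∑ e, P.indicator c e • rhoP a e + ∑ e, Q.indicator d e • rhoM a e}

lemma genCone_face (a : E → (M →ₗ[ℝ] ℝ)) (P Q : Set E) (τ : Set (tildeN a))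
    (hτne : τ.Nonempty) (hτ : IsExposed ℝ (genCone a P Q) τ) :
    ∃ l : tildeN a →ₗ[ℝ] ℝ, (∀ e ∈ P, l (rhoP a e) ≤ 0) ∧ (∀ e ∈ Q, l (rhoM a e) ≤ 0) ∧
      τ = genCone a {e ∈ P | l (rhoP a e) = 0} {e ∈ Q | l (rhoM a e) = 0} := by
  classical
  obtain ⟨l, hl⟩ := hτ hτne
  have hz : (0 : tildeN a) ∈ genCone a P Q := ⟨0, 0, by simp, by simp, by simp⟩
  obtain ⟨v0, hv0⟩ := hτne
  rw [hl] at hv0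
  obtain ⟨hv0, hmax⟩ := hv0
  have h0 : l v0 = 0 := by
    have h1 := hmax 0 hz
    have h2 : (2 : ℝ) • v0 ∈ genCone a P Q := by
      obtain ⟨c, d, hc, hd, rfl⟩ := hv0
      refine ⟨(2 : ℝ) • c, (2 : ℝ) • d, fun e => by simp [hc e], fun e => by simp [hd e], ?_⟩
      simp only [smul_add, Finset.smul_sum, Set.indicator_const_smul_apply, Pi.smul_def, smul_smul,
        smul_eq_mul, Set.indicator_const_mul]
    have h3 := hmax _ h2
    rw [map_smul, smul_eq_mul] at h3
    rw [map_zero] at h1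
    linarith
  rw [h0] at hmax
  have hP : ∀ e ∈ P, l (rhoP a e) ≤ 0 := by
    intro e he
    refine hmax _ ⟨Pi.single e 1, 0, ?_, by simp, ?_⟩
    · intro f; by_cases h : f = e
      · subst h; simp
      · simp [h]
    · rw [Finset.sum_eq_single e]
      · simp [he]
      · intro f _ h; by_cases hf : f ∈ P <;> simp [h, hf]
      · simp
  have hQ : ∀ e ∈ Q, l (rhoM a e) ≤ 0 := by
    intro e he
    refine hmax _ ⟨0, Pi.single e 1, by simp, ?_, ?_⟩
    · intro f; by_cases h : f = e
      · subst h; simp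
      · simp [h]
    · rw [Finset.sum_eq_single (s := Finset.univ) (f := fun f =>
        Q.indicator (Pi.single e 1 : E → ℝ) f • rhoM a f) e]
      · simp [he]
      · intro f _ h; by_cases hf : f ∈ Q <;> simp [h, hf]
      · simp
  refine ⟨l.toLinearMap, hP, hQ, ?_⟩
  simp only [ContinuousLinearMap.coe_coe]
  ext v
  rw [hl]
  constructor
  · rintro ⟨⟨c, d, hc, hd, rfl⟩, hv⟩
    have hv1 := hv 0 hz
    rw [map_zero] at hv1
    simp only [map_add, map_sum, map_smul, smul_eq_mul] at hv1
    have hp : ∀ e ∈ Finset.univ, P.indicator c e * l (rhoP a e) ≤ 0 := by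
      intro e _
      by_cases h : e ∈ P
      · simpa [h] using mul_nonpos_of_nonneg_of_nonpos (hc e) (hP e h)
      · simp [h]
    have hq : ∀ e ∈ Finset.univ, Q.indicator d e * l (rhoM a e) ≤ 0 := by
      intro e _
      by_cases h : e ∈ Q
      · simpa [h] using mul_nonpos_of_nonneg_of_nonpos (hd e) (hQ e h)
      · simp [h]
    have sp := Finset.sum_nonpos hp
    have sq := Finset.sum_nonpos hq
    have ep := (Finset.sum_eq_zero_iff_of_nonpos hp).1 (by linarith)
    have eq := (Finset.sum_eq_zero_iff_of_nonpos hq).1 (by linarith)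
    refine ⟨c, d, hc, hd, ?_⟩
    congr 1 <;> refine Finset.sum_congr rfl fun e he => ?_
    · have := ep e he
      by_cases h : e ∈ P <;> by_cases h' : l (rhoP a e) = 0 <;> simp_all
    · have := eq e he
      by_cases h : e ∈ Q <;> by_cases h' : l (rhoM a e) = 0 <;> simp_all
  · rintro ⟨c, d, hc, hd, rfl⟩
    refine ⟨⟨{e ∈ P | l (rhoP a e) = 0}.indicator c, {e ∈ Q | l (rhoM a e) = 0}.indicator d,
      fun e => Set.indicator_nonneg (fun e _ => hc e) e,
      fun e => Set.indicator_nonneg (fun e _ => hd e) e, ?_⟩, ?_⟩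
    · congr 1 <;> refine Finset.sum_congr rfl fun e he => ?_
      · by_cases h : e ∈ P <;> by_cases h' : l (rhoP a e) = 0 <;> simp [h, h']
      · by_cases h : e ∈ Q <;> by_cases h' : l (rhoM a e) = 0 <;> simp [h, h']
    · intro y hy
      refine (hmax y hy).trans (le_of_eq ?_)
      simp only [map_add, map_sum, map_smul, smul_eq_mul]
      rw [Finset.sum_eq_zero, Finset.sum_eq_zero, add_zero]
      · intro e _
        by_cases h : e ∈ Q <;> by_cases h' : l (rhoM a e) = 0 <;> simp [h, h']
      · intro e _
        by_cases h : e ∈ P <;> by_cases h' : l (rhoP a e) = 0 <;> simp [h, h']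

/-- Classification of faces (from the proof of Proposition 4.1): every nonempty exposed face
of `σ_{S,R}` is of the form `σ_{S',R'}` for some `S' ⊆ S` and face `R'` of `𝒜_{S'}` whose
closure contains `R`. -/
theorem exposed_face_of_sigmaCone
    (a : E → (M →ₗ[ℝ] ℝ)) (r : E → ℝ)
    (ha : ∀ e, a e ≠ 0) (hspan : Submodule.span ℝ (Set.range a) = ⊤)
    (S : Set E) (R : Set M) (hR : IsFace a r S R)
    (τ : Set (tildeN a)) (hτne : τ.Nonempty)
    (hτ : IsExposed ℝ (sigmaCone a r S R) τ) :
    ∃ (S' : Set E) (R' : Set M), S' ⊆ S ∧ IsFace a r S' R' ∧ R ⊆ closure R' ∧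
      τ = sigmaCone a r S' R' := by
  obtain ⟨m₀, rfl⟩ := hR
  obtain ⟨l, hP, hQ, hl⟩ := genCone_face a _ _ τ hτne hτ
  obtain ⟨m, hm⟩ := exists_repr a l
  simp only [mem_posSet_face, mem_negSet_face] at hP hQ hl
  set P : Set E := {e | (e ∈ S ∧ SignType.sign (a e m₀ + r e) ≤ 0) ∧ l (rhoP a e) = 0} with hPdef
  set Q : Set E := {e | (e ∈ S ∧ 0 ≤ SignType.sign (a e m₀ + r e)) ∧ l (rhoM a e) = 0} with hQdef
  have hev : ∀ p : M, ∀ᶠ t : ℝ in nhdsWithin 0 (Set.Ioi 0), ∀ e,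
      SignType.sign (a e (p - t • m) + r e) =
        if SignType.sign (a e p + r e) = 0 then SignType.sign (-(a e m))
          else SignType.sign (a e p + r e) := by
    intro p
    rw [Filter.eventually_all]
    intro e
    filter_upwards [eventually_sign (a e p + r e) (-(a e m))] with t ht
    rw [← ht]
    congr 1
    simp only [map_sub, map_smul, smul_eq_mul]
    ring
  obtain ⟨t₀, ht₀⟩ := (hev m₀).exists
  have hsub : P ∪ Q ⊆ S := by
    rintro e (he | he)
    · exact he.1.1
    · exact he.1.1
  refine ⟨P ∪ Q, {x : M | ∀ e ∈ P ∪ Q, SignType.sign (a e x + r e)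
      = SignType.sign (a e (m₀ - t₀ • m) + r e)}, hsub, ⟨_, rfl⟩, ?_, ?_⟩
  · intro p hp
    have ht : Filter.Tendsto (fun t : ℝ => p - t • m) (nhdsWithin 0 (Set.Ioi 0)) (nhds p) := by
      have : ContinuousAt (fun t : ℝ => p - t • m) 0 := by fun_prop
      have h := this.tendsto
      simp only [zero_smul, sub_zero] at h
      exact h.mono_left nhdsWithin_le_nhds
    refine mem_closure_of_tendsto ht ?_
    filter_upwards [hev p] with t h e he
    rw [h e, ht₀ e, hp e (hsub he)]
  · rw [hl]
    have e1 : posSet a r (P ∪ Q) {x : M | ∀ e ∈ P ∪ Q, SignType.sign (a e x + r e)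
      = SignType.sign (a e (m₀ - t₀ • m) + r e)} = P := by
      ext e
      rw [mem_posSet_face, ht₀ e]
      have hPe := hP e
      have hQe := hQ e
      have hme := hm e
      simp only [hPdef, hQdef, Set.mem_union, Set.mem_setOf_eq]
      by_cases hS : e ∈ S
      · rcases lt_trichotomy (a e m₀ + r e) 0 with hb | hb | hb
        · simp [hS, hb, sign_neg hb]
        · simp only [hb, hS, sign_zero, le_refl, true_and, and_self, true_imp_iff, if_true,
            sign_nonpos_iff] at hPe hQe ⊢
          constructor
          · rintro ⟨h | h, h'⟩ <;> linarith
          · intro h; exact ⟨Or.inl h, by linarith⟩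
        · simp [hS, hb, sign_pos hb]
      · simp [hS]
    have e2 : negSet a r (P ∪ Q) {x : M | ∀ e ∈ P ∪ Q, SignType.sign (a e x + r e)
      = SignType.sign (a e (m₀ - t₀ • m) + r e)} = Q := by
      ext e
      rw [mem_negSet_face, ht₀ e]
      have hPe := hP e
      have hQe := hQ e
      have hme := hm e
      simp only [hPdef, hQdef, Set.mem_union, Set.mem_setOf_eq]
      by_cases hS : e ∈ S
      · rcases lt_trichotomy (a e m₀ + r e) 0 with hb | hb | hb
        · simp [hS, hb, sign_neg hb]
        · simp only [hb, hS, sign_zero, le_refl, true_and, and_self, true_imp_iff, if_true,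
            sign_nonneg_iff] at hPe hQe ⊢
          constructor
          · rintro ⟨h | h, h'⟩ <;> linarith
          · intro h; exact ⟨Or.inr h, by linarith⟩
        · simp [hS, hb, sign_pos hb]
      · simp [hS]
    rw [sigmaCone, e1, e2, genCone]

end
end

section
/- Let S ⊆ E and let R be a face of 𝒜_S. Then the dimension of the linear span of the cone σ_{S,R} in Ñ equals |S| + finrank(span{a_e : e ∈ S^0(R)}), i.e. dim σ_{S,R} = |S| + codim R. (Dimension formula of Proposition 4.1.) -/
open Set Submodule

noncomputable section

variable {E : Type*} [Fintype E] [DecidableEq E]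
variable {M : Type*} [NormedAddCommGroup M] [NormedSpace ℝ M] [FiniteDimensional ℝ M]

/-- Functions supported on `P`. -/
def suppSub (P : Set E) : Submodule ℝ (E → ℝ) where
  carrier := {x | ∀ e, e ∉ P → x e = 0}
  add_mem' := by
    intro x y hx hy e he
    simp [hx e he, hy e he]
  zero_mem' := by
    intro e he
    rfl
  smul_mem' := by
    intro c x hx e he
    simp [hx e he]

theorem mem_suppSub (P : Set E) (x : E → ℝ) : x ∈ suppSub P ↔ ∀ e, e ∉ P → x e = 0 := Iff.rfl

theorem sum_rhoP (a : E → (M →ₗ[ℝ] ℝ)) (c : E → ℝ) :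
    ∑ e, c e • rhoP a e = (nabLam a).mkQ (c, 0) := by
  have h : ((c, 0) : (E → ℝ) × (E → ℝ)) = LinearMap.inl ℝ (E → ℝ) (E → ℝ) c := rfl
  rw [h]
  conv_rhs => rw [pi_eq_sum_univ' c]
  rw [map_sum, map_sum]
  refine Finset.sum_congr rfl fun e _ => ?_
  rw [map_smul, map_smul]
  congr 2

theorem sum_rhoM (a : E → (M →ₗ[ℝ] ℝ)) (c : E → ℝ) :
    ∑ e, c e • rhoM a e = (nabLam a).mkQ (0, c) := by
  have h : ((0, c) : (E → ℝ) × (E → ℝ)) = LinearMap.inr ℝ (E → ℝ) (E → ℝ) c := rfl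
  rw [h]
  conv_rhs => rw [pi_eq_sum_univ' c]
  rw [map_sum, map_sum]
  refine Finset.sum_congr rfl fun e _ => ?_
  rw [map_smul, map_smul]
  congr 2

theorem mem_sigmaCone (a : E → (M →ₗ[ℝ] ℝ)) (r : E → ℝ) (S : Set E) (R : Set M)
    (x y : E → ℝ) (hx : x ∈ suppSub (posSet a r S R)) (hy : y ∈ suppSub (negSet a r S R))
    (hx0 : ∀ e, 0 ≤ x e) (hy0 : ∀ e, 0 ≤ y e) :
    (nabLam a).mkQ (x, y) ∈ sigmaCone a r S R := by
  refine ⟨x, y, hx0, hy0, ?_⟩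
  have h1 : (posSet a r S R).indicator x = x := by
    rw [Set.indicator_eq_self]
    intro e he
    by_contra h
    exact he (hx e h)
  have h2 : (negSet a r S R).indicator y = y := by
    rw [Set.indicator_eq_self]
    intro e he
    by_contra h
    exact he (hy e h)
  rw [h1, h2, sum_rhoP, sum_rhoM, ← map_add]
  simp

theorem span_sigmaCone (a : E → (M →ₗ[ℝ] ℝ)) (r : E → ℝ) (S : Set E) (R : Set M) :
    Submodule.span ℝ (sigmaCone a r S R) =
      ((suppSub (posSet a r S R)).prod (suppSub (negSet a r S R))).map (nabLam a).mkQ := by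
  apply le_antisymm
  · rw [Submodule.span_le]
    rintro v ⟨c, d, -, -, rfl⟩
    rw [sum_rhoP, sum_rhoM, ← map_add]
    refine Submodule.mem_map_of_mem ?_
    refine ⟨?_, ?_⟩
    · intro e he
      simp [he]
    · intro e he
      simp [he]
  · rintro _ ⟨⟨x, y⟩, ⟨hx, hy⟩, rfl⟩
    have hx' : ∀ e, e ∉ posSet a r S R → x e = 0 := hx
    have hy' : ∀ e, e ∉ negSet a r S R → y e = 0 := hy
    have h : ((x, y) : (E → ℝ) × (E → ℝ)) =
        ((fun e => max (x e) 0), (fun e => max (y e) 0)) -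
        ((fun e => max (-x e) 0), (fun e => max (-y e) 0)) := by
      ext e
      · simp only [Prod.fst_sub, Pi.sub_apply]
        rcases le_total (x e) 0 with h | h
        · rw [max_eq_right h, max_eq_left (by linarith)]; ring
        · rw [max_eq_left h, max_eq_right (by linarith)]; ring
      · simp only [Prod.snd_sub, Pi.sub_apply]
        rcases le_total (y e) 0 with h | h
        · rw [max_eq_right h, max_eq_left (by linarith)]; ring
        · rw [max_eq_left h, max_eq_right (by linarith)]; ring
    rw [h, map_sub]
    apply Submodule.sub_mem <;> apply Submodule.subset_span <;> apply mem_sigmaCone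
    · intro e he
      simp [hx' e he]
    · intro e he
      simp [hy' e he]
    · intro e; exact le_max_right _ _
    · intro e; exact le_max_right _ _
    · intro e he
      simp [hx' e he]
    · intro e he
      simp [hy' e he]
    · intro e; exact le_max_right _ _
    · intro e; exact le_max_right _ _

/-- `(x, y) ↦ x + y` on the quotient. -/
def addMap (a : E → (M →ₗ[ℝ] ℝ)) : tildeN a →ₗ[ℝ] (E → ℝ) :=
  (nabLam a).liftQ (LinearMap.fst ℝ (E → ℝ) (E → ℝ) + LinearMap.snd ℝ (E → ℝ) (E → ℝ)) (by
    rintro _ ⟨x, -, rfl⟩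
    simp [nabla])

/-- `(x, y) ↦ ∑ x e • a e` on the quotient. -/
def fstMap (a : E → (M →ₗ[ℝ] ℝ)) : tildeN a →ₗ[ℝ] (M →ₗ[ℝ] ℝ) :=
  (nabLam a).liftQ (toN a ∘ₗ LinearMap.fst ℝ (E → ℝ) (E → ℝ)) (by
    rintro _ ⟨x, hx, rfl⟩
    have hx' : toN a x = 0 := hx
    simp [nabla, hx'])

theorem addMap_mk (a : E → (M →ₗ[ℝ] ℝ)) (x y : E → ℝ) :
    addMap a ((nabLam a).mkQ (x, y)) = x + y := rfl

theorem fstMap_mk (a : E → (M →ₗ[ℝ] ℝ)) (x y : E → ℝ) :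
    fstMap a ((nabLam a).mkQ (x, y)) = toN a x := rfl

theorem finrank_suppSub (S : Set E) : Module.finrank ℝ (suppSub S) = S.ncard := by
  classical
  let f : suppSub S ≃ₗ[ℝ] (S → ℝ) :=
    { toFun := fun x e => x.1 e
      map_add' := fun _ _ => rfl
      map_smul' := fun _ _ => rfl
      invFun := fun y => ⟨fun e => if h : e ∈ S then y ⟨e, h⟩ else 0, by
        intro e he
        simp [he]⟩
      left_inv := by
        intro x
        ext e
        by_cases h : e ∈ S
        · simp [h]
        · simp [h, x.2 e h]
      right_inv := by
        intro y
        ext e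
        simp }
  rw [f.finrank_eq, Module.finrank_fintype_fun_eq_card, ← Nat.card_eq_fintype_card,
    Nat.card_coe_set_eq]

theorem toN_suppSub (a : E → (M →ₗ[ℝ] ℝ)) (Z : Set E) :
    (suppSub Z).map (toN a) = Submodule.span ℝ (a '' Z) := by
  apply le_antisymm
  · rintro _ ⟨x, hx, rfl⟩
    have hx' : ∀ e, e ∉ Z → x e = 0 := hx
    rw [toN, Fintype.linearCombination_apply]
    refine Submodule.sum_mem _ fun e _ => ?_
    by_cases h : e ∈ Z
    · exact Submodule.smul_mem _ _ (Submodule.subset_span ⟨e, h, rfl⟩)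
    · rw [hx' e h, zero_smul]
      exact Submodule.zero_mem _
  · rw [Submodule.span_le]
    rintro _ ⟨e, he, rfl⟩
    refine ⟨Pi.single e 1, ?_, ?_⟩
    · intro i hi
      rw [Pi.single_eq_of_ne]
      rintro rfl
      exact hi he
    · simp [toN]

theorem pos_union_neg (a : E → (M →ₗ[ℝ] ℝ)) (r : E → ℝ) (S : Set E) (R : Set M)
    (hR : IsFace a r S R) (e : E) (he : e ∈ S) :
    e ∈ posSet a r S R ∨ e ∈ negSet a r S R := by
  obtain ⟨m₀, rfl⟩ := hR
  rcases le_total (a e m₀ + r e) 0 with h | h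
  · left
    refine ⟨he, fun m hm => ?_⟩
    have h1 := hm e he
    change a e m + r e ≤ 0
    by_contra! h2
    rw [sign_pos h2, eq_comm, sign_eq_one_iff] at h1
    linarith
  · right
    refine ⟨he, fun m hm => ?_⟩
    have h1 := hm e he
    change 0 ≤ a e m + r e
    by_contra! h2
    rw [sign_neg h2, eq_comm, sign_eq_neg_one_iff] at h1
    linarith

theorem map_add_span (a : E → (M →ₗ[ℝ] ℝ)) (r : E → ℝ) (S : Set E) (R : Set M)
    (hR : IsFace a r S R) :
    (Submodule.span ℝ (sigmaCone a r S R)).map (addMap a) = suppSub S := by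
  classical
  rw [span_sigmaCone]
  apply le_antisymm
  · rintro _ ⟨_, ⟨⟨x, y⟩, ⟨hx, hy⟩, rfl⟩, rfl⟩
    rw [addMap_mk]
    intro e he
    have h1 : x e = 0 := hx e fun h => he h.1
    have h2 : y e = 0 := hy e fun h => he h.1
    simp [h1, h2]
  · intro z hz
    refine ⟨_, ⟨((fun e => if e ∈ posSet a r S R then z e else 0),
      (fun e => if e ∈ posSet a r S R then 0 else z e)), ⟨?_, ?_⟩, rfl⟩, ?_⟩
    · intro e he
      simp [he]
    · intro e he
      by_cases h : e ∈ posSet a r S R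
      · simp [h]
      · have : e ∉ S := fun hS => (pos_union_neg a r S R hR e hS).elim h he
        simp [hz e this]
    · rw [addMap_mk]
      ext e
      by_cases h : e ∈ posSet a r S R <;> simp [h]

theorem map_fst_ker (a : E → (M →ₗ[ℝ] ℝ)) (r : E → ℝ) (S : Set E) (R : Set M) :
    (Submodule.span ℝ (sigmaCone a r S R) ⊓ LinearMap.ker (addMap a)).map (fstMap a) =
      Submodule.span ℝ (a '' zeroSet a r S R) := by
  rw [span_sigmaCone, ← toN_suppSub]
  apply le_antisymm
  · rintro _ ⟨_, ⟨⟨⟨x, y⟩, ⟨hx, hy⟩, rfl⟩, hk⟩, rfl⟩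
    have hk' : x + y = 0 := hk
    rw [fstMap_mk]
    refine Submodule.mem_map_of_mem ?_
    intro e he
    by_cases h : e ∈ posSet a r S R
    · have h2 : y e = 0 := hy e fun h' => he ⟨h, h'⟩
      have h3 := congrFun hk' e
      simpa [h2] using h3
    · exact hx e h
  · rintro _ ⟨x, hx, rfl⟩
    refine ⟨(nabLam a).mkQ (x, -x), ⟨⟨(x, -x), ⟨?_, ?_⟩, rfl⟩, ?_⟩, fstMap_mk a x _⟩
    · intro e he
      exact hx e fun h => he h.1
    · intro e he
      have : x e = 0 := hx e fun h => he h.2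
      simp [this]
    · change addMap a ((nabLam a).mkQ (x, -x)) = 0
      rw [addMap_mk, add_neg_cancel]

theorem fst_inj (a : E → (M →ₗ[ℝ] ℝ)) (v : tildeN a) (h1 : addMap a v = 0)
    (h2 : fstMap a v = 0) : v = 0 := by
  obtain ⟨⟨x, y⟩, rfl⟩ := (nabLam a).mkQ_surjective v
  rw [addMap_mk] at h1
  rw [fstMap_mk] at h2
  rw [Submodule.mkQ_apply, Submodule.Quotient.mk_eq_zero]
  refine ⟨x, h2, ?_⟩
  rw [eq_neg_of_add_eq_zero_right h1]
  rfl

/-- Dimension formula of Proposition 4.1: `dim σ_{S,R} = |S| + codim R`, where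
`codim R = finrank (span {a_e : e ∈ S^0(R)})`. -/
theorem sigmaCone_dim
    (a : E → (M →ₗ[ℝ] ℝ)) (r : E → ℝ)
    (ha : ∀ e, a e ≠ 0) (hspan : Submodule.span ℝ (Set.range a) = ⊤)
    (S : Set E) (R : Set M) (hR : IsFace a r S R) :
    Module.finrank ℝ (Submodule.span ℝ (sigmaCone a r S R)) =
      S.ncard + Module.finrank ℝ (Submodule.span ℝ (a '' zeroSet a r S R)) := by
  set V := Submodule.span ℝ (sigmaCone a r S R) with hV
  have h1 := LinearMap.finrank_range_add_finrank_ker ((addMap a).domRestrict V)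
  rw [LinearMap.range_domRestrict, hV, map_add_span a r S R hR, finrank_suppSub] at h1
  rw [← hV] at h1
  rw [← h1, ← map_fst_ker, ← hV]
  congr 1
  rw [LinearMap.ker_domRestrict]
  rw [← Submodule.map_comap_subtype, ← Submodule.map_comp, ← LinearMap.range_domRestrict]
  symm
  apply LinearMap.finrank_range_of_inj
  rw [injective_iff_map_eq_zero]
  rintro ⟨⟨v, hv⟩, hk⟩ h
  have h0 : v = 0 := fst_inj a v hk h
  subst h0
  rfl

end
end

section
/- Let S ⊆ E and let Q ⊆ S be such that the family (a_q)_{q ∈ Q} is a basis of the subspace span{a_e : e ∈ S} of N. Then the family consisting of ρ_q^+ for q ∈ Q together with ρ_e^- for e ∈ S is a basis of the subspace V₂ = span{ρ_e^+, ρ_e^- : e ∈ S} of Ñ; in particular dim V₂ = |Q| + |S|. (Basis claim (4.1) from the proof of Proposition 4.1.) -/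
open Set Submodule

noncomputable section

variable {E : Type*} [Fintype E] [DecidableEq E]
variable {M : Type*} [NormedAddCommGroup M] [NormedSpace ℝ M] [FiniteDimensional ℝ M]

/-- The map `(x, y) ↦ (toN x, x + y)` on the quotient. -/
def phiMap (a : E → (M →ₗ[ℝ] ℝ)) : tildeN a →ₗ[ℝ] (M →ₗ[ℝ] ℝ) × (E → ℝ) :=
  (nabLam a).liftQ
    (((toN a).comp (LinearMap.fst ℝ (E → ℝ) (E → ℝ))).prod
      (LinearMap.fst ℝ (E → ℝ) (E → ℝ) + LinearMap.snd ℝ (E → ℝ) (E → ℝ))) (by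
    rintro _ ⟨x, hx, rfl⟩
    have hx' : toN a x = 0 := hx
    simp [nabla, hx'])

lemma toN_single (a : E → (M →ₗ[ℝ] ℝ)) (e : E) : toN a (Pi.single e 1) = a e := by
  simp [toN, Fintype.linearCombination_apply_single]

lemma phiMap_rhoP (a : E → (M →ₗ[ℝ] ℝ)) (e : E) :
    phiMap a (rhoP a e) = (a e, Pi.single e 1) := by
  have h : phiMap a (rhoP a e) = (toN a (Pi.single e 1), Pi.single e 1 + 0) := rfl
  rw [h, toN_single, add_zero]

lemma phiMap_rhoM (a : E → (M →ₗ[ℝ] ℝ)) (e : E) :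
    phiMap a (rhoM a e) = (0, Pi.single e 1) := by
  have h : phiMap a (rhoM a e) = (toN a 0, 0 + Pi.single e 1) := rfl
  rw [h, map_zero, zero_add]

lemma rho_indep (a : E → (M →ₗ[ℝ] ℝ)) (S Q : Set E)
    (hQindep : LinearIndependent ℝ (fun q : Q => a (q : E))) :
    LinearIndependent ℝ
        (Sum.elim (fun q : Q => rhoP a (q : E)) (fun e : S => rhoM a (e : E))) := by
  classical
  haveI : Fintype Q := Fintype.ofFinite Q
  haveI : Fintype S := Fintype.ofFinite S
  apply LinearIndependent.of_comp (phiMap a)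
  rw [Fintype.linearIndependent_iff]
  intro g hg
  simp only [Fintype.sum_sum_type, Function.comp, Sum.elim_inl, Sum.elim_inr, phiMap_rhoP,
    phiMap_rhoM] at hg
  have h1 := congrArg Prod.fst hg
  have h2 := congrArg Prod.snd hg
  simp only [Prod.fst_add, Prod.snd_add, Prod.fst_sum, Prod.snd_sum, Prod.smul_fst,
    Prod.smul_snd, smul_zero, Finset.sum_const_zero, add_zero, Prod.fst_zero,
    Prod.snd_zero] at h1 h2
  have k1 := Fintype.linearIndependent_iff.1 hQindep (fun q => g (Sum.inl q)) h1
  have hS : LinearIndependent ℝ (fun e : S => (Pi.single (e : E) (1 : ℝ) : E → ℝ)) :=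
    (Pi.linearIndependent_single_one E ℝ).comp (fun e : S => (e : E)) Subtype.val_injective
  simp only [k1, zero_smul, Finset.sum_const_zero, zero_add] at h2
  have k2 := Fintype.linearIndependent_iff.1 hS (fun q => g (Sum.inr q)) h2
  rintro (i | i)
  · exact k1 i
  · exact k2 i

lemma rho_span (a : E → (M →ₗ[ℝ] ℝ)) (S Q : Set E) (hQS : Q ⊆ S)
    (hQspan : Submodule.span ℝ (a '' Q) = Submodule.span ℝ (a '' S)) :
    Submodule.span ℝ
        (Set.range (Sum.elim (fun q : Q => rhoP a (q : E)) (fun e : S => rhoM a (e : E)))) =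
      Submodule.span ℝ ((rhoP a '' S) ∪ (rhoM a '' S)) := by
  have hr : Set.range (Sum.elim (fun q : Q => rhoP a (q : E)) (fun e : S => rhoM a (e : E)))
      = (rhoP a '' Q) ∪ (rhoM a '' S) := by
    rw [Set.Sum.elim_range, Set.image_eq_range, Set.image_eq_range]
  rw [hr]
  apply le_antisymm
  · exact Submodule.span_mono (Set.union_subset_union_left _ (Set.image_mono hQS))
  rw [Submodule.span_le]
  rintro _ (⟨e, he, rfl⟩ | hm)
  swap
  · exact Submodule.subset_span (Or.inr hm)
  have hae : a e ∈ Submodule.span ℝ (a '' Q) := by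
    rw [hQspan]; exact Submodule.subset_span ⟨e, he, rfl⟩
  have him : a '' Q = toN a '' ((fun q => (Pi.single q 1 : E → ℝ)) '' Q) := by
    rw [Set.image_image]; simp only [toN_single]
  rw [him, Submodule.span_image] at hae
  obtain ⟨x, hx, hxe⟩ := hae
  let P : (E → ℝ) →ₗ[ℝ] tildeN a := (nabLam a).mkQ.comp (LinearMap.inl ℝ (E → ℝ) (E → ℝ))
  let N' : (E → ℝ) →ₗ[ℝ] tildeN a := (nabLam a).mkQ.comp (LinearMap.inr ℝ (E → ℝ) (E → ℝ))
  set W := Submodule.span ℝ (rhoP a '' Q ∪ rhoM a '' S) with hW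
  have hPx : P x ∈ W := by
    have : Submodule.span ℝ ((fun q => (Pi.single q 1 : E → ℝ)) '' Q) ≤ W.comap P := by
      rw [Submodule.span_le]
      rintro _ ⟨q, hq, rfl⟩
      exact Submodule.subset_span (Or.inl ⟨q, hq, rfl⟩)
    exact this hx
  have hNx : N' x ∈ W := by
    have : Submodule.span ℝ ((fun q => (Pi.single q 1 : E → ℝ)) '' Q) ≤ W.comap N' := by
      rw [Submodule.span_le]
      rintro _ ⟨q, hq, rfl⟩
      exact Submodule.subset_span (Or.inr ⟨q, hQS hq, rfl⟩)
    exact this hx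
  have hNe : rhoM a e ∈ W := Submodule.subset_span (Or.inr ⟨e, he, rfl⟩)
  have key : rhoP a e = P x + rhoM a e - N' x := by
    refine (Submodule.Quotient.eq (nabLam a)
      (y := ((x, 0) + (0, Pi.single e 1) - (0, x) : (E → ℝ) × (E → ℝ)))).2 ?_
    refine ⟨Pi.single e 1 - x, ?_, ?_⟩
    · change toN a (Pi.single e 1 - x) = 0
      rw [map_sub, toN_single, hxe, sub_self]
    · simp [nabla]
  change rhoP a e ∈ W
  rw [key]
  exact W.sub_mem (W.add_mem hPx hNe) hNx

/-- Basis claim (4.1) from the proof of Proposition 4.1: if `(a_q)_{q ∈ Q}` is a basis of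
`span {a_e : e ∈ S}`, then `{ρ_q^+ : q ∈ Q} ∪ {ρ_e^- : e ∈ S}` is a basis of
`V₂ = span {ρ_e^+, ρ_e^- : e ∈ S}`; in particular `dim V₂ = |Q| + |S|`. -/
theorem rho_basis_of_V2
    (a : E → (M →ₗ[ℝ] ℝ)) (r : E → ℝ)
    (ha : ∀ e, a e ≠ 0) (hspan : Submodule.span ℝ (Set.range a) = ⊤)
    (S Q : Set E) (hQS : Q ⊆ S)
    (hQindep : LinearIndependent ℝ (fun q : Q => a (q : E)))
    (hQspan : Submodule.span ℝ (a '' Q) = Submodule.span ℝ (a '' S)) :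
    LinearIndependent ℝ
        (Sum.elim (fun q : Q => rhoP a (q : E)) (fun e : S => rhoM a (e : E))) ∧
    Submodule.span ℝ
        (Set.range (Sum.elim (fun q : Q => rhoP a (q : E)) (fun e : S => rhoM a (e : E)))) =
      Submodule.span ℝ ((rhoP a '' S) ∪ (rhoM a '' S)) ∧
    Module.finrank ℝ (Submodule.span ℝ ((rhoP a '' S) ∪ (rhoM a '' S))) =
      Q.ncard + S.ncard := by
  have h1 := rho_indep a S Q hQindep
  have h2 := rho_span a S Q hQS hQspan
  refine ⟨h1, h2, ?_⟩
  classical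
  haveI : Fintype Q := Fintype.ofFinite Q
  haveI : Fintype S := Fintype.ofFinite S
  rw [← h2, finrank_span_eq_card h1, Fintype.card_sum, ← Nat.card_eq_fintype_card,
    ← Nat.card_eq_fintype_card, Nat.card_coe_set_eq, Nat.card_coe_set_eq]

end
end

section
/- Let K be an infinite field, V a finite-dimensional K-vector space, E a finite set, a : E → V a family of nonzero vectors, and S ⊆ E. Then there exists a K-linear functional f : V → K such that {e ∈ E : f(a_e) = 0} = S if and only if S is a flat of the configuration a, i.e. S = {e ∈ E : a_e ∈ span{a_s : s ∈ S}}. -/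
open Set Submodule

/-- Combinatorial core of Proposition 5.1: for an infinite field `K` and a configuration
`a : E → V` of nonzero vectors, there is a linear functional vanishing exactly on
`{a_e : e ∈ S}` iff `S` is a flat of the configuration. -/
theorem exists_functional_vanishing_iff_flat
    {K : Type*} [Field K] [Infinite K]
    {V : Type*} [AddCommGroup V] [Module K V] [FiniteDimensional K V]
    {E : Type*} [Fintype E]
    (a : E → V) (ha : ∀ e, a e ≠ 0) (S : Set E) :
    (∃ f : V →ₗ[K] K, {e : E | f (a e) = 0} = S) ↔
      S = {e : E | a e ∈ Submodule.span K (a '' S)} := by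
  constructor
  · rintro ⟨f, hf⟩
    have hle : Submodule.span K (a '' S) ≤ LinearMap.ker f := by
      rw [Submodule.span_le]
      rintro _ ⟨e, he, rfl⟩
      rw [← hf] at he
      exact he
    apply Set.Subset.antisymm
    · intro e he
      exact Submodule.subset_span ⟨e, he, rfl⟩
    · intro e he
      have h : f (a e) = 0 := hle he
      rw [← hf]
      exact h
  · intro hS
    have hout : ∀ e : E, e ∉ S → a e ∉ Submodule.span K (a '' S) := by
      intro e he h
      apply he
      rw [hS]
      exact h
    obtain ⟨g, hg⟩ := Module.exists_dual_forall_apply_ne_zero (K := K)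
      (fun e : {e : E // e ∉ S} => (Submodule.span K (a '' S)).mkQ (a e))
      (fun e h => hout e e.2 (by simpa using h))
    refine ⟨g.comp (Submodule.span K (a '' S)).mkQ, ?_⟩
    apply Set.Subset.antisymm
    · intro e he
      by_contra hn
      exact hg ⟨e, hn⟩ he
    · intro e he
      have h : (Submodule.span K (a '' S)).mkQ (a e) = 0 := by
        rw [Submodule.mkQ_apply, Submodule.Quotient.mk_eq_zero]
        exact Submodule.subset_span ⟨e, he, rfl⟩
      change g ((Submodule.span K (a '' S)).mkQ (a e)) = 0
      rw [h, map_zero]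
end

section
/- Let E be a finite set, k ≥ 1, and let ∅ = F_0 ⊊ F_1 ⊊ ⋯ ⊊ F_k = E be a chain of subsets of E. For a nonempty subset S ⊆ E, there exist nonnegative reals c_1, …, c_{k−1} and a real number c such that the vector v = c_1·δ_{F_1} + ⋯ + c_{k−1}·δ_{F_{k−1}} + c·δ_E ∈ ℝ^E satisfies v_e > 0 for all e ∈ S and v_e = 0 for all e ∉ S, if and only if S = F_i for some 1 ≤ i ≤ k. (The support of a vector in the Bergman cone β_𝒻 is a flat of the flag 𝒻; used in the proof of Lemma 6.2.) -/
open Set Finset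

/-- Support of a vector in the Bergman cone `β_𝒻` (used in the proof of Lemma 6.2):
given a chain `∅ = F_0 ⊊ F_1 ⊊ ⋯ ⊊ F_k = E`, a nonempty `S ⊆ E` is the support of a vector
`c_1 δ_{F_1} + ⋯ + c_{k-1} δ_{F_{k-1}} + c δ_E` with `c_1, …, c_{k-1} ≥ 0`, `c ∈ ℝ`
iff `S = F_i` for some `1 ≤ i ≤ k`. -/
theorem bergman_support_iff
    {E : Type*} [Fintype E]
    (k : ℕ) (hk : 1 ≤ k) (F : Fin (k + 1) → Set E)
    (hs : StrictMono F) (h0 : F 0 = ∅) (hl : F (Fin.last k) = Set.univ)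
    (S : Set E) (hS : S.Nonempty) :
    (∃ c : Fin (k + 1) → ℝ, c 0 = 0 ∧ (∀ i : Fin (k + 1), 0 < i.val → i.val < k → 0 ≤ c i) ∧
      (∀ e ∈ S, 0 < (∑ i : Fin (k + 1), c i • (F i).indicator (1 : E → ℝ)) e) ∧
      (∀ e ∉ S, (∑ i : Fin (k + 1), c i • (F i).indicator (1 : E → ℝ)) e = 0)) ↔
    ∃ i : Fin (k + 1), 1 ≤ i.val ∧ S = F i := by
  classical
  constructor
  · rintro ⟨c, -, hc, hpos, hzero⟩
    have hex : ∃ n : ℕ, ∃ h : n < k + 1, S ⊆ F ⟨n, h⟩ := by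
      refine ⟨k, Nat.lt_succ_self k, ?_⟩
      have : F ⟨k, Nat.lt_succ_self k⟩ = Set.univ := hl
      rw [this]
      exact Set.subset_univ S
    obtain ⟨hn, hsub⟩ := Nat.find_spec hex
    have hmin : ∀ m, m < Nat.find hex → ¬ ∃ h : m < k + 1, S ⊆ F ⟨m, h⟩ :=
      fun m hm => Nat.find_min hex hm
    generalize Nat.find hex = n at hn hsub hmin
    have hn1 : 1 ≤ n := by
      rcases Nat.eq_zero_or_pos n with h | h
      · subst h
        obtain ⟨x, hx⟩ := hS
        have h1 := hsub hx
        have h2 : F ⟨0, hn⟩ = ∅ := h0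
        rw [h2] at h1
        exact absurd h1 (Set.notMem_empty x)
      · exact h
    refine ⟨⟨n, hn⟩, hn1, Set.Subset.antisymm hsub ?_⟩
    have hlt : n - 1 < k + 1 := by omega
    have hns : ¬ S ⊆ F ⟨n - 1, hlt⟩ := fun h => hmin (n - 1) (by omega) ⟨hlt, h⟩
    obtain ⟨e, heS, heF⟩ := Set.not_subset.mp hns
    intro x hx
    by_contra hxS
    have h1 := hpos e heS
    have h2 := hzero x hxS
    have h3 : (∑ i : Fin (k + 1), c i • (F i).indicator (1 : E → ℝ)) e ≤
        (∑ i : Fin (k + 1), c i • (F i).indicator (1 : E → ℝ)) x := by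
      rw [Finset.sum_apply, Finset.sum_apply]
      refine Finset.sum_le_sum fun j _ => ?_
      simp only [Pi.smul_apply, smul_eq_mul, Set.indicator_apply, Pi.one_apply]
      by_cases hej : e ∈ F j
      · have hj : (⟨n, hn⟩ : Fin (k + 1)) ≤ j := by
          by_contra hlt'
          have hj' : j ≤ ⟨n - 1, hlt⟩ := by
            rw [Fin.le_def] at *
            simp only at *
            omega
          exact heF (hs.monotone hj' hej)
        have hxj : x ∈ F j := hs.monotone hj hx
        simp [hej, hxj]
      · by_cases hxj : x ∈ F j
        · have hj0 : 0 < j.val := by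
            rcases Nat.eq_zero_or_pos j.val with h | h
            · have : j = 0 := Fin.ext h
              rw [this, h0] at hxj
              exact absurd hxj (Set.notMem_empty x)
            · exact h
          have hjk : j.val < k := by
            have := j.isLt
            rcases Nat.lt_or_ge j.val k with h | h
            · exact h
            · have : j = Fin.last k := Fin.ext (by simp; omega)
              rw [this, hl] at hej
              exact absurd (Set.mem_univ e) hej
          simpa [hej, hxj] using hc j hj0 hjk
        · simp [hej, hxj]
    linarith
  · rintro ⟨i, hi, rfl⟩
    have hv : (∑ j : Fin (k + 1), (Pi.single i 1 : Fin (k + 1) → ℝ) j •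
        (F j).indicator (1 : E → ℝ)) = (F i).indicator (1 : E → ℝ) := by
      rw [Finset.sum_eq_single i]
      · simp
      · intro j _ hj
        simp [hj]
      · simp
    refine ⟨Pi.single i 1, ?_, ?_, ?_, ?_⟩
    · apply Pi.single_eq_of_ne
      rintro rfl
      simp at hi
    · intro j _ _
      by_cases h : j = i
      · subst h; simp
      · simp [h]
    · intro e he
      rw [hv]
      simp [he]
    · intro e he
      rw [hv]
      simp [he]
end
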